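/- Let C = β ⨍_{B_1} |y|² dy = βN/(N+2). Then the sequence of random variables M_k = |X_k − x_0|² − C k ε², k ≥ 0, is a submartingale with respect to the filtration (F_k). -/

import Mathlib

open MeasureTheory Metric

noncomputable section

lemma aux_expand {N : ℕ} (ρ : Measure (EuclideanSpace ℝ (Fin N))) [IsFiniteMeasure ρ] (L e : ℝ)
    (hsymm : ∀ E : Set (EuclideanSpace ℝ (Fin N)), MeasurableSet E → ρ E = ρ (-E))
    (hb : ∀ᵐ z ∂ρ, ‖z‖ ≤ L) (a : EuclideanSpace ℝ (Fin N)) :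
    ∫ z, ‖a + e • z‖ ^ 2 ∂ρ = ρ.real Set.univ * ‖a‖ ^ 2 + e ^ 2 * ∫ z, ‖z‖ ^ 2 ∂ρ := by
  have hmap : ρ.map (fun z => -z) = ρ := by
    ext E hE
    rw [Measure.map_apply measurable_neg hE, hsymm E hE]
    rfl
  have hI1 : Integrable (fun z => inner ℝ a z) ρ := by
    refine Integrable.of_bound (by fun_prop) (‖a‖ * L) ?_
    filter_upwards [hb] with z hz
    exact (norm_inner_le_norm a z).trans (by gcongr)
  have hI2 : Integrable (fun z => ‖z‖ ^ 2) ρ := by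
    refine Integrable.of_bound (by fun_prop) (L ^ 2) ?_
    filter_upwards [hb] with z hz
    rw [norm_pow, norm_norm]
    gcongr
  have h0 : ∫ z, inner ℝ a z ∂ρ = 0 := by
    have h : ∫ z, inner ℝ a z ∂ρ = ∫ z, inner ℝ a (-z) ∂ρ := by
      conv_lhs => rw [← hmap]
      rw [integral_map measurable_neg.aemeasurable (by fun_prop)]
    simp only [inner_neg_right, integral_neg] at h
    linarith
  have h1 : ∀ z, ‖a + e • z‖ ^ 2 = ‖a‖ ^ 2 + 2 * e * inner ℝ a z + e ^ 2 * ‖z‖ ^ 2 := by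
    intro z
    rw [norm_add_sq_real, inner_smul_right, norm_smul, mul_pow, Real.norm_eq_abs, sq_abs]
    ring
  simp_rw [h1]
  have hI3 : Integrable (fun z => ‖a‖ ^ 2 + 2 * e * inner ℝ a z) ρ :=
    (integrable_const _).add (hI1.const_mul _)
  rw [integral_add hI3 (hI2.const_mul _),
    integral_add (integrable_const _) (hI1.const_mul _), integral_const_mul, integral_const_mul,
    h0, integral_const]
  simp

lemma aux_ball {N : ℕ} (hN : 1 ≤ N) {e : ℝ} (he : 0 < e) :
    ∫ z in ball (0 : EuclideanSpace ℝ (Fin N)) e, ‖z‖ ^ 2 =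
      volume.real (ball (0 : EuclideanSpace ℝ (Fin N)) e) * (e ^ 2 * ((N : ℝ) / (N + 2))) := by
  have : Nonempty (Fin N) := ⟨⟨0, hN⟩⟩
  have h1 : ∫ z in ball (0 : EuclideanSpace ℝ (Fin N)) e, ‖z‖ ^ 2 =
      ∫ z : EuclideanSpace ℝ (Fin N), (Set.Iio e).indicator (fun t : ℝ => t ^ 2) ‖z‖ := by
    rw [← integral_indicator measurableSet_ball]
    congr 1
    ext z
    simp [Set.indicator]
  have h2 : ∫ y in Set.Ioi (0 : ℝ), y ^ (N - 1) • (Set.Iio e).indicator (fun t : ℝ => t ^ 2) y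
      = e ^ (N + 2) / (N + 2) := by
    have : ∀ y : ℝ, y ^ (N - 1) • (Set.Iio e).indicator (fun t : ℝ => t ^ 2) y =
        (Set.Iio e).indicator (fun t : ℝ => t ^ (N + 1)) y := by
      intro y
      by_cases hy : y < e
      · simp only [Set.indicator, Set.mem_Iio, hy, if_true, smul_eq_mul]
        rw [← pow_add]
        congr 1
        omega
      · simp [Set.indicator, hy]
    simp_rw [this]
    rw [setIntegral_indicator measurableSet_Iio, Set.Ioi_inter_Iio, ← integral_Ioc_eq_integral_Ioo,
      ← intervalIntegral.integral_of_le he.le, integral_pow]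
    push_cast
    simp
    ring
  rw [h1, integral_fun_norm_addHaar]
  simp only [finrank_euclideanSpace, Fintype.card_fin]
  rw [h2]
  have h3 : volume.real (ball (0 : EuclideanSpace ℝ (Fin N)) e) =
      e ^ N * volume.real (ball (0 : EuclideanSpace ℝ (Fin N)) 1) := by
    rw [measureReal_def, Measure.addHaar_ball_of_pos _ _ he]
    simp [ENNReal.toReal_mul, he.le, measureReal_def]
  rw [h3]
  simp only [nsmul_eq_mul, smul_eq_mul]
  ring

lemma aux_avg {N : ℕ} (hN : 1 ≤ N) {e : ℝ} (he : 0 < e) (x x₀ : EuclideanSpace ℝ (Fin N)) :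
    ⨍ y in ball x e, ‖y - x₀‖ ^ 2 = ‖x - x₀‖ ^ 2 + e ^ 2 * ((N : ℝ) / (N + 2)) := by
  have h1 : ∫ y in ball x e, ‖y - x₀‖ ^ 2 =
      ∫ z in ball (0 : EuclideanSpace ℝ (Fin N)) e, ‖(x - x₀) + (1 : ℝ) • z‖ ^ 2 := by
    have hp := (measurePreserving_add_left (volume : Measure (EuclideanSpace ℝ (Fin N))) x)
    rw [← hp.setIntegral_preimage_emb (measurableEmbedding_addLeft x)]
    have : (fun z => x + z) ⁻¹' ball x e = ball (0 : EuclideanSpace ℝ (Fin N)) e := by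
      ext z; simp
    rw [this]
    congr 1
    ext z
    rw [one_smul]
    congr 2
    abel
  have hpos : 0 < volume.real (ball (0 : EuclideanSpace ℝ (Fin N)) e) :=
    ENNReal.toReal_pos (measure_ball_pos _ _ he).ne' measure_ball_lt_top.ne
  have : IsFiniteMeasure (volume.restrict (ball (0 : EuclideanSpace ℝ (Fin N)) e)) :=
    ⟨by simpa using measure_ball_lt_top⟩
  rw [setAverage_eq, Measure.addHaar_real_ball_center, h1, aux_expand _ e 1, aux_ball hN he]
  · rw [measureReal_restrict_apply_univ, smul_eq_mul]
    field_simp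
  · intro E hE
    rw [Measure.restrict_apply hE, Measure.restrict_apply hE.neg]
    have : -E ∩ ball (0 : EuclideanSpace ℝ (Fin N)) e = -(E ∩ ball 0 e) := by
      ext z; simp
    rw [this, Measure.measure_neg]
  · filter_upwards [ae_restrict_mem measurableSet_ball] with z hz
    simpa using (mem_ball_zero_iff.1 hz).le

/-- `|X_k − x₀|² − C k ε²` is a submartingale for
`C = β N/(N+2)`. -/
theorem submartingale_dist_sq (N : ℕ) (hN : 1 ≤ N) (Λ β ε : ℝ) (hΛ : 1 ≤ Λ) (hε : 0 < ε)
    (hβ : β ∈ Set.Ioc (0 : ℝ) 1)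
    (ν : EuclideanSpace ℝ (Fin N) → Measure (EuclideanSpace ℝ (Fin N)))
    (hprob : ∀ x, IsProbabilityMeasure (ν x))
    (hsupp : ∀ x, ν x (closedBall (0 : EuclideanSpace ℝ (Fin N)) Λ)ᶜ = 0)
    (hsymm : ∀ x (E : Set (EuclideanSpace ℝ (Fin N))), MeasurableSet E → ν x E = ν x (-E))
    (hmeas : ∀ w : EuclideanSpace ℝ (Fin N) → ℝ, Measurable w → (∃ M, ∀ y, |w y| ≤ M) →
      Measurable fun x => ∫ z, w (x + z) ∂ν x)
    {Ωhat : Type} [m0 : MeasurableSpace Ωhat] (μ : Measure Ωhat) [IsProbabilityMeasure μ]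
    (𝔉 : Filtration ℕ m0)
    (X : ℕ → Ωhat → EuclideanSpace ℝ (Fin N)) (hadapted : Adapted 𝔉 X)
    (x₀ : EuclideanSpace ℝ (Fin N)) (hX0 : ∀ᵐ ω ∂μ, X 0 ω = x₀)
    (hstep : ∀ (k : ℕ) (g : EuclideanSpace ℝ (Fin N) → ℝ), Measurable g →
      (∃ M, ∀ y, |g y| ≤ M) →
      (μ[(fun ω => g (X (k + 1) ω)) | 𝔉 k]) =ᵐ[μ]
        fun ω => (1 - β) * ∫ z, g (X k ω + ε • z) ∂ν (X k ω) +
          β * ⨍ y in ball (X k ω) ε, g y) :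
    Submartingale
      (fun (k : ℕ) (ω : Ωhat) =>
        ‖X k ω - x₀‖ ^ 2 - (β * ((N : ℝ) / (N + 2))) * k * ε ^ 2) 𝔉 μ := by
  have hC0 : 0 ≤ ε * Λ := by positivity
  -- one step stays in the enlarged ball
  have hin1 : ∀ x (r : ℝ), ‖x - x₀‖ ≤ r → ∀ᵐ z ∂ν x, ‖x + ε • z - x₀‖ ≤ r + ε * Λ := by
    intro x r hx
    have hz : ∀ᵐ z ∂ν x, z ∈ closedBall (0 : EuclideanSpace ℝ (Fin N)) Λ := hsupp x
    filter_upwards [hz] with z hz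
    have hz' : ‖z‖ ≤ Λ := mem_closedBall_zero_iff.1 hz
    calc ‖x + ε • z - x₀‖ = ‖(x - x₀) + ε • z‖ := by congr 1; abel
      _ ≤ ‖x - x₀‖ + ‖ε • z‖ := norm_add_le _ _
      _ ≤ r + ε * Λ := by
        rw [norm_smul, Real.norm_of_nonneg hε.le]
        gcongr
  have hin2 : ∀ x (r : ℝ), ‖x - x₀‖ ≤ r → ∀ y ∈ ball x ε, ‖y - x₀‖ ≤ r + ε * Λ := by
    intro x r hx y hy
    have hy' : ‖y - x‖ < ε := mem_ball_iff_norm.1 hy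
    calc ‖y - x₀‖ = ‖(x - x₀) + (y - x)‖ := by congr 1; abel
      _ ≤ ‖x - x₀‖ + ‖y - x‖ := norm_add_le _ _
      _ ≤ r + ε * Λ := by nlinarith
  have hXm : ∀ k, Measurable (X k) := fun k => (hadapted k).mono (𝔉.le k) le_rfl
  -- almost sure boundedness
  have hbd : ∀ k : ℕ, ∀ᵐ ω ∂μ, ‖X k ω - x₀‖ ≤ k * (ε * Λ) := by
    intro k
    induction k with
    | zero => filter_upwards [hX0] with ω h; simp [h]
    | succ k ih =>
      set r : ℝ := (k : ℝ) * (ε * Λ) + ε * Λ with hr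
      have hSm : MeasurableSet {y : EuclideanSpace ℝ (Fin N) | r < ‖y - x₀‖} :=
        measurableSet_lt measurable_const (by fun_prop)
      set g : EuclideanSpace ℝ (Fin N) → ℝ := {y | r < ‖y - x₀‖}.indicator (fun _ => 1) with hg
      have hgm : Measurable g := measurable_const.indicator hSm
      have hg0 : ∀ y, ‖y - x₀‖ ≤ r → g y = 0 := by
        intro y hy
        simp [hg, hy]
      have hgb : ∀ y, |g y| ≤ 1 := by
        intro y
        by_cases h : r < ‖y - x₀‖ <;> simp [hg, Set.indicator, h]
      have hs := hstep k g hgm ⟨1, hgb⟩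
      have hs0 : (μ[(fun ω => g (X (k + 1) ω)) | 𝔉 k]) =ᵐ[μ] fun _ => 0 := by
        filter_upwards [hs, ih] with ω h1 h2
        rw [h1]
        have e1 : ∫ z, g (X k ω + ε • z) ∂ν (X k ω) = 0 := by
          apply integral_eq_zero_of_ae
          filter_upwards [hin1 _ _ h2] with z hz
          exact hg0 _ hz
        have e2 : ∫ y in ball (X k ω) ε, g y = 0 :=
          setIntegral_eq_zero_of_forall_eq_zero fun y hy => hg0 _ (hin2 _ _ h2 y hy)
        rw [e1, setAverage_eq, e2]
        simp
      have hi : ∫ ω, g (X (k + 1) ω) ∂μ = 0 := by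
        rw [← integral_condExp (𝔉.le k), integral_congr_ae hs0]
        simp
      have hint : Integrable (fun ω => g (X (k + 1) ω)) μ :=
        Integrable.of_bound (hgm.comp (hXm _)).aestronglyMeasurable 1 (ae_of_all _ fun ω => hgb _)
      have hnn : 0 ≤ fun ω => g (X (k + 1) ω) := fun ω =>
        Set.indicator_nonneg (fun _ _ => zero_le_one) _
      rw [integral_eq_zero_iff_of_nonneg hnn hint] at hi
      filter_upwards [hi] with ω h
      by_contra hlt
      push Not at hlt
      have hlt' : r < ‖X (k + 1) ω - x₀‖ := by
        rw [hr]; push_cast at hlt; linarith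
      simp [hg, Set.indicator, hlt'] at h
  have hint : ∀ k, Integrable (fun ω => ‖X k ω - x₀‖ ^ 2) μ := by
    intro k
    refine Integrable.of_bound (((hXm k).sub_const x₀).norm.pow_const 2).aestronglyMeasurable
      (((k : ℝ) * (ε * Λ)) ^ 2) ?_
    filter_upwards [hbd k] with ω h
    rw [norm_pow, norm_norm]
    gcongr
  refine submartingale_nat ?_ (fun k => (hint k).sub (integrable_const _)) ?_
  · intro k
    have hm : Measurable (fun y : EuclideanSpace ℝ (Fin N) =>
        ‖y - x₀‖ ^ 2 - (β * ((N : ℝ) / (N + 2))) * k * ε ^ 2) := by fun_prop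
    exact Measurable.stronglyMeasurable (hm.comp (hadapted k))
  intro k
  set r : ℝ := (k : ℝ) * (ε * Λ) + ε * Λ with hr
  have hr0 : 0 ≤ r := by positivity
  have hSm : MeasurableSet {y : EuclideanSpace ℝ (Fin N) | ‖y - x₀‖ ≤ r} :=
    measurableSet_le (by fun_prop) measurable_const
  set g : EuclideanSpace ℝ (Fin N) → ℝ :=
    {y | ‖y - x₀‖ ≤ r}.indicator (fun y => ‖y - x₀‖ ^ 2) with hg
  have hgm : Measurable g := Measurable.indicator (by fun_prop) hSm
  have hg1 : ∀ y, ‖y - x₀‖ ≤ r → g y = ‖y - x₀‖ ^ 2 := by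
    intro y hy
    simp [hg, hy]
  have hgb : ∀ y, |g y| ≤ r ^ 2 := by
    intro y
    by_cases h : ‖y - x₀‖ ≤ r
    · rw [hg1 y h, abs_of_nonneg (by positivity)]
      gcongr
    · simp [hg, Set.indicator, h, sq_nonneg]
  have hs := hstep k g hgm ⟨_, hgb⟩
  have hc1 : μ[(fun ω => g (X (k + 1) ω)) | 𝔉 k] =ᵐ[μ]
      μ[(fun ω => ‖X (k + 1) ω - x₀‖ ^ 2) | 𝔉 k] := by
    apply condExp_congr_ae
    filter_upwards [hbd (k + 1)] with ω h
    apply hg1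
    rw [hr]; push_cast at h; linarith
  have hc2 := condExp_sub (hint (k + 1))
    (integrable_const (μ := μ) ((β * ((N : ℝ) / (N + 2))) * ((k + 1 : ℕ) : ℝ) * ε ^ 2)) (𝔉 k)
  rw [condExp_const (𝔉.le k)] at hc2
  filter_upwards [hs, hc1, hc2, hbd k] with ω h1 h2 h3 h4
  refine le_of_le_of_eq ?_ h3.symm
  rw [Pi.sub_apply, ← h2, h1]
  have e1 : ‖X k ω - x₀‖ ^ 2 ≤ ∫ z, g (X k ω + ε • z) ∂ν (X k ω) := by
    have heq : ∫ z, g (X k ω + ε • z) ∂ν (X k ω) =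
        ∫ z, ‖(X k ω - x₀) + ε • z‖ ^ 2 ∂ν (X k ω) := by
      apply integral_congr_ae
      filter_upwards [hin1 _ _ h4] with z hz
      rw [hg1 _ hz]
      congr 2
      abel
    have := hprob (X k ω)
    have hz : ∀ᵐ z ∂ν (X k ω), z ∈ closedBall (0 : EuclideanSpace ℝ (Fin N)) Λ := hsupp _
    rw [heq, aux_expand _ Λ ε (hsymm _) (hz.mono fun z hz => mem_closedBall_zero_iff.1 hz)]
    have : 0 ≤ ∫ z, ‖z‖ ^ 2 ∂ν (X k ω) := integral_nonneg fun z => sq_nonneg _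
    simp only [probReal_univ, one_mul]
    have := mul_nonneg (sq_nonneg ε) this
    linarith
  have e2 : ⨍ y in ball (X k ω) ε, g y =
      ‖X k ω - x₀‖ ^ 2 + ε ^ 2 * ((N : ℝ) / (N + 2)) := by
    rw [← aux_avg hN hε, setAverage_eq, setAverage_eq,
      setIntegral_congr_fun measurableSet_ball fun y hy => hg1 y (hin2 _ _ h4 y hy)]
  rw [e2]
  have h5 := mul_le_mul_of_nonneg_left e1 (sub_nonneg.2 hβ.2)
  push_cast
  linarith
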